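/- Let H be a complex Hilbert space and φ a state on B(H). Then φ is normal if and only if there exists a density matrix ρ, i.e. a positive trace-class operator ρ on H with tr(ρ) = 1, such that φ(A) = tr(ρ A) for all A ∈ B(H). -/

import Mathlib

open scoped InnerProductSpace ComplexOrder

/-- The Loewner order relation on bounded operators: `A ≤ B` iff `B - A` is positive. -/
def OpLE {H : Type} [NormedAddCommGroup H] [InnerProductSpace ℂ H] [CompleteSpace H]
    (A B : H →L[ℂ] H) : Prop :=
  (B - A).IsPositive

/-- A state `φ` on `B(H)` is normal if `φ(sup_α A_α) = sup_α φ(A_α)` for every norm-bounded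
increasing net of positive operators possessing a least upper bound. -/
def IsNormalState {H : Type} [NormedAddCommGroup H] [InnerProductSpace ℂ H] [CompleteSpace H]
    (φ : (H →L[ℂ] H) →L[ℂ] ℂ) : Prop :=
  ∀ (ι : Type) (_ : Preorder ι) (_ : IsDirected ι (· ≤ ·)) (A : ι → H →L[ℂ] H),
    (∀ i j, i ≤ j → OpLE (A i) (A j)) →
    (∀ i, (A i).IsPositive) →
    (∃ C : ℝ, ∀ i, ‖A i‖ ≤ C) →
    ∀ S : H →L[ℂ] H,
      ((∀ i, OpLE (A i) S) ∧ ∀ T : H →L[ℂ] H, (∀ i, OpLE (A i) T) → OpLE S T) →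
      IsLUB (Set.range fun i => φ (A i)) (φ S)

open Filter Topology InnerProductSpace

theorem isPos_iff {H : Type} [NormedAddCommGroup H] [InnerProductSpace ℂ H] [CompleteSpace H]
    (T : H →L[ℂ] H) : T.IsPositive ↔ ∀ x, 0 ≤ ⟪x, T x⟫_ℂ := by
  constructor
  · intro h x
    exact h.inner_nonneg_right x
  · intro h
    rw [ContinuousLinearMap.isPositive_iff_complex]
    intro x
    have := h x
    rw [← inner_conj_symm, ← Complex.star_def, star_nonneg_iff] at this
    obtain ⟨h1, h2⟩ := Complex.nonneg_iff.1 this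
    refine ⟨?_, h1⟩
    apply Complex.ext <;> simp [← h2]

theorem cs_state {H : Type} [NormedAddCommGroup H] [InnerProductSpace ℂ H] [CompleteSpace H]
    (φ : (H →L[ℂ] H) →L[ℂ] ℂ)
    (hpos : ∀ A : H →L[ℂ] H, A.IsPositive → 0 ≤ φ A) (a b : H →L[ℂ] H) :
    ‖φ (star a * b)‖ ^ 2 ≤ (φ (star a * a)).re * (φ (star b * b)).re := by
  let f : (H →L[ℂ] H) →ₚ[ℂ] ℂ := PositiveLinearMap.mk₀ φ.toLinearMap
    (fun x hx => hpos x ((ContinuousLinearMap.nonneg_iff_isPositive x).1 hx))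
  have h := norm_inner_le_norm (𝕜 := ℂ) (f.toPreGNS a) (f.toPreGNS b)
  have ha := f.preGNS_norm_sq (f.toPreGNS a)
  have hb := f.preGNS_norm_sq (f.toPreGNS b)
  rw [PositiveLinearMap.preGNS_inner_def] at h
  simp only [PositiveLinearMap.ofPreGNS_toPreGNS] at h ha hb
  change ‖φ (star a * b)‖ ≤ _ at h
  change _ = φ (star a * a) at ha
  change _ = φ (star b * b) at hb
  rw [← ha, ← hb]
  norm_cast
  rw [← mul_pow]
  gcongr

theorem approx_state {H : Type} [NormedAddCommGroup H] [InnerProductSpace ℂ H] [CompleteSpace H]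
    (φ : (H →L[ℂ] H) →L[ℂ] ℂ)
    (hpos : ∀ A : H →L[ℂ] H, A.IsPositive → 0 ≤ φ A) (hnorm : ‖φ‖ = 1) (A P : H →L[ℂ] H)
    (hP1 : star P = P) (hP2 : P * P = P) :
    ‖φ A - φ (A * P)‖ ^ 2 ≤ ‖A‖ ^ 2 * (φ (1 - P)).re := by
  have h := cs_state φ hpos (star A) (1 - P)
  have e : star (1 - P) * (1 - P) = 1 - P := by
    simp [hP1, mul_sub, sub_mul, hP2]
  have hQ : 0 ≤ (φ (1 - P)).re := by
    have := hpos (1 - P) ((ContinuousLinearMap.nonneg_iff_isPositive _).1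
      (e ▸ star_mul_self_nonneg (1 - P)))
    exact (Complex.nonneg_iff.1 this).1
  rw [e, star_star, mul_sub, mul_one, map_sub] at h
  refine h.trans ?_
  gcongr
  calc (φ (A * star A)).re ≤ ‖φ (A * star A)‖ := Complex.re_le_norm _
    _ ≤ ‖φ‖ * ‖A * star A‖ := φ.le_opNorm _
    _ = ‖A‖ ^ 2 := by rw [hnorm, one_mul, CStarRing.norm_self_mul_star, sq]

/-- finite projections -/
noncomputable def finProj {H : Type} [NormedAddCommGroup H] [InnerProductSpace ℂ H]
    {ι : Type} (e : HilbertBasis ι ℂ H) (F : Finset ι) : H →L[ℂ] H :=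
  ∑ j ∈ F, rankOne ℂ (e j) (e j)

section
variable {H : Type} [NormedAddCommGroup H] [InnerProductSpace ℂ H] [CompleteSpace H]
    {ι : Type} (e : HilbertBasis ι ℂ H)

theorem mul_finProj (A : H →L[ℂ] H) (F : Finset ι) :
    A * finProj e F = ∑ j ∈ F, rankOne ℂ (A (e j)) (e j) := by
  rw [finProj, Finset.mul_sum]
  exact Finset.sum_congr rfl fun j _ => comp_rankOne _ _ _

theorem finProj_apply (F : Finset ι) (x : H) :
    finProj e F x = ∑ j ∈ F, ⟪e j, x⟫_ℂ • e j := by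
  simp [finProj]

theorem finProj_mem {F : Finset ι} {j : ι} (hj : j ∈ F) : finProj e F (e j) = e j := by
  classical
  rw [finProj_apply, Finset.sum_eq_single j]
  · simp [e.orthonormal.1 j, inner_self_eq_norm_sq_to_K]
  · intro b _ hb
    simp [e.orthonormal.2 hb]
  · exact fun h => absurd hj h

theorem finProj_not_mem {F : Finset ι} {j : ι} (hj : j ∉ F) : finProj e F (e j) = 0 := by
  rw [finProj_apply, Finset.sum_eq_zero]
  intro b hb
  have : b ≠ j := by rintro rfl; exact hj hb
  simp [e.orthonormal.2 this]

theorem finProj_sq (F : Finset ι) : finProj e F * finProj e F = finProj e F := by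
  rw [mul_finProj]
  conv_rhs => rw [finProj]
  exact Finset.sum_congr rfl fun j hj => by rw [finProj_mem e hj]

theorem finProj_pos (F : Finset ι) : (finProj e F).IsPositive :=
  ContinuousLinearMap.isPositive_sum _ fun _ _ => isPositive_rankOne_self _

theorem finProj_star (F : Finset ι) : star (finProj e F) = finProj e F :=
  (finProj_pos e F).isSelfAdjoint

theorem one_sub_finProj_pos (F : Finset ι) : (1 - finProj e F).IsPositive := by
  rw [← ContinuousLinearMap.nonneg_iff_isPositive]
  have : star (1 - finProj e F) * (1 - finProj e F) = 1 - finProj e F := by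
    simp [finProj_star, mul_sub, sub_mul, finProj_sq]
  rw [← this]
  exact star_mul_self_nonneg _

theorem finProj_tendsto (x : H) : Tendsto (fun F => finProj e F x) atTop (𝓝 x) := by
  have := e.hasSum_repr x
  simp only [e.repr_apply_apply] at this
  simp only [finProj_apply]
  exact this

theorem finProj_mono {F G : Finset ι} (h : F ≤ G) : (finProj e G - finProj e F).IsPositive := by
  classical
  have : finProj e G - finProj e F = ∑ j ∈ G \ F, rankOne ℂ (e j) (e j) := by
    rw [sub_eq_iff_eq_add, finProj, finProj, Finset.sum_sdiff h]
  rw [this]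
  exact ContinuousLinearMap.isPositive_sum _ fun _ _ => isPositive_rankOne_self _

theorem finProj_norm (F : Finset ι) : ‖finProj e F‖ ≤ 1 := by
  have h0 : 0 ≤ finProj e F := (ContinuousLinearMap.nonneg_iff_isPositive _).2 (finProj_pos e F)
  exact (CStarAlgebra.norm_le_one_iff_of_nonneg _ h0).2 (one_sub_finProj_pos e F)

end

section
variable {H : Type} [NormedAddCommGroup H] [InnerProductSpace ℂ H] [CompleteSpace H]

theorem isLUB_one_finProj {ι : Type} (e : HilbertBasis ι ℂ H) :
    (∀ F, OpLE (finProj e F) 1) ∧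
      ∀ T : H →L[ℂ] H, (∀ F, OpLE (finProj e F) T) → OpLE 1 T := by
  have : OrderClosedTopology ℂ := Complex.orderClosedTopology
  refine ⟨one_sub_finProj_pos e, fun T hT => ?_⟩
  rw [OpLE, isPos_iff]
  intro x
  have h1 : Tendsto (fun F => ⟪x, (T - finProj e F) x⟫_ℂ) atTop (𝓝 ⟪x, (T - 1) x⟫_ℂ) :=
    tendsto_const_nhds.inner (tendsto_const_nhds.sub (finProj_tendsto e x))
  exact ge_of_tendsto' h1 fun F => (isPos_iff _).1 (hT F) x

theorem tendsto_of_normal (φ : (H →L[ℂ] H) →L[ℂ] ℂ)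
    (hpos : ∀ A : H →L[ℂ] H, A.IsPositive → 0 ≤ φ A) (hone : φ 1 = 1)
    (hn : IsNormalState φ) {ι : Type} (e : HilbertBasis ι ℂ H) :
    Tendsto (fun F => (φ (1 - finProj e F)).re) atTop (𝓝 0) := by
  have hl := hn (Finset ι) inferInstance inferInstance (finProj e)
    (fun _ _ h => finProj_mono e h) (finProj_pos e) ⟨1, finProj_norm e⟩ 1 (isLUB_one_finProj e)
  have h0 : ∀ F, 0 ≤ (φ (1 - finProj e F)).re := fun F =>
    (Complex.nonneg_iff.1 (hpos _ (one_sub_finProj_pos e F))).1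
  have hanti : ∀ F G, F ≤ G → (φ (1 - finProj e G)).re ≤ (φ (1 - finProj e F)).re := by
    intro F G h
    have := (Complex.nonneg_iff.1 (hpos _ (finProj_mono e h))).1
    simp only [map_sub, Complex.sub_re] at this ⊢
    linarith
  have hex : ∀ ε > 0, ∃ F, (φ (1 - finProj e F)).re < ε := by
    intro ε hε
    by_contra! hcon
    have hub : ((1 - ε : ℝ) : ℂ) ∈ upperBounds (Set.range fun F => φ (finProj e F)) := by
      rintro _ ⟨F, rfl⟩
      have h1 := hcon F
      have h2 := (Complex.nonneg_iff.1 (hpos _ (finProj_pos e F))).2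
      rw [map_sub, hone] at h1
      simp only [Complex.sub_re, Complex.one_re] at h1
      rw [Complex.le_def]
      refine ⟨?_, ?_⟩
      · simp only [Complex.ofReal_re]; linarith
      · simp only [Complex.ofReal_im]; exact h2.symm
    have := (Complex.le_def.1 (hl.2 hub)).1
    rw [hone] at this
    simp only [Complex.ofReal_re, Complex.one_re] at this
    linarith
  rw [Metric.tendsto_nhds]
  intro ε hε
  obtain ⟨F, hF⟩ := hex ε hε
  filter_upwards [Ici_mem_atTop F] with G hG
  rw [Real.dist_eq, sub_zero, abs_of_nonneg (h0 G)]
  exact (hanti F G hG).trans_lt hF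

theorem exists_density (φ : (H →L[ℂ] H) →L[ℂ] ℂ) :
    ∃ ρ : H →L[ℂ] H, ∀ x y, ⟪x, ρ y⟫_ℂ = φ (rankOne ℂ y x) := by
  let B : H →L⋆[ℂ] H →L[ℂ] ℂ :=
    (ContinuousLinearMap.compL ℂ H (H →L[ℂ] H) ℂ φ).comp (rankOne ℂ (E := H) (F := H)).flip
  refine ⟨ContinuousLinearMap.adjoint (continuousLinearMapOfBilin B), fun x y => ?_⟩
  rw [ContinuousLinearMap.adjoint_inner_right, continuousLinearMapOfBilin_apply]
  rfl

theorem norm_apply_sq_le (B : H →L[ℂ] H) (hB : B.IsPositive) (x : H) :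
    ‖B x‖ ^ 2 ≤ ‖B‖ * (⟪x, B x⟫_ℂ).re := by
  obtain ⟨C, rfl⟩ := CStarAlgebra.nonneg_iff_eq_star_mul_self.1
    ((ContinuousLinearMap.nonneg_iff_isPositive B).2 hB)
  have h1 : ⟪x, (star C * C) x⟫_ℂ = ((‖C x‖ ^ 2 : ℝ) : ℂ) := by
    change ⟪x, (star C) (C x)⟫_ℂ = _
    rw [ContinuousLinearMap.star_eq_adjoint, ContinuousLinearMap.adjoint_inner_right,
      inner_self_eq_norm_sq_to_K]
    simp
  rw [h1, CStarRing.norm_star_mul_self, Complex.ofReal_re]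
  have h2 : ‖(star C * C) x‖ ≤ ‖C‖ * ‖C x‖ := by
    have := (star C).le_opNorm (C x)
    rwa [norm_star] at this
  calc _ ≤ (‖C‖ * ‖C x‖) ^ 2 := by gcongr
    _ = _ := by ring

theorem strong_tendsto {ι : Type} [Preorder ι] [IsDirected ι (· ≤ ·)] [Nonempty ι]
    (A : ι → H →L[ℂ] H) (hmono : ∀ i j, i ≤ j → OpLE (A i) (A j))
    (hbd : ∃ C : ℝ, ∀ i, ‖A i‖ ≤ C) (S : H →L[ℂ] H)
    (hS : (∀ i, OpLE (A i) S) ∧ ∀ T : H →L[ℂ] H, (∀ i, OpLE (A i) T) → OpLE S T) (x : H) :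
    Tendsto (fun i => A i x) atTop (𝓝 (S x)) := by
  have : OrderClosedTopology ℂ := Complex.orderClosedTopology
  obtain ⟨C, hC⟩ := hbd
  have hC0 : 0 ≤ C := (norm_nonneg _).trans (hC (Classical.arbitrary ι))
  have key : ∀ x, ∃ y, Tendsto (fun i => A i x) atTop (𝓝 y) := by
    intro x
    apply cauchy_map_iff_exists_tendsto.1
    let f : ι → ℝ := fun i => (⟪x, A i x⟫_ℂ).re
    have hdiff : ∀ i j, i ≤ j → ‖A j x - A i x‖ ^ 2 ≤ (2 * C) * (f j - f i) ∧ f i ≤ f j := by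
      intro i j hij
      have hp := hmono i j hij
      have h1 := norm_apply_sq_le _ hp x
      have h2 := (Complex.nonneg_iff.1 ((isPos_iff _).1 hp x)).1
      have h3 : ‖A j - A i‖ ≤ 2 * C := by
        refine (norm_sub_le _ _).trans ?_
        linarith [hC i, hC j]
      have h4 : (⟪x, (A j - A i) x⟫_ℂ).re = f j - f i := by
        simp [f, inner_sub_right]
      rw [h4] at h1 h2
      refine ⟨h1.trans ?_, by linarith⟩
      gcongr
    have hbdd : BddAbove (Set.range f) := by
      refine ⟨(⟪x, S x⟫_ℂ).re, ?_⟩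
      rintro _ ⟨i, rfl⟩
      have := (Complex.nonneg_iff.1 ((isPos_iff _).1 (hS.1 i) x)).1
      simp only [ContinuousLinearMap.sub_apply, inner_sub_right, Complex.sub_re] at this
      simp only [f]
      linarith
    have hlub := isLUB_ciSup hbdd
    rw [Metric.cauchy_iff]
    refine ⟨inferInstance, fun ε hε => ?_⟩
    let δ := ε ^ 2 / (16 * (C + 1))
    have hδ : 0 < δ := by positivity
    obtain ⟨_, ⟨N, rfl⟩, hN, -⟩ := hlub.exists_between_sub_self hδ
    have hb : ∀ i, N ≤ i → ‖A i x - A N x‖ < ε / 2 := by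
      intro i hi
      have h1 := (hdiff N i hi).1
      have h2 : f i - f N < δ := by
        have := hlub.1 ⟨i, rfl⟩
        linarith
      have h3 := (hdiff N i hi).2
      refine lt_of_pow_lt_pow_left₀ 2 (by positivity) (h1.trans_lt ?_)
      calc 2 * C * (f i - f N) ≤ 2 * C * δ := by gcongr
        _ < 4 * (C + 1) * δ := by nlinarith
        _ = (ε / 2) ^ 2 := by simp only [δ]; field_simp; ring
    refine ⟨(fun i => A i x) '' Set.Ici N, image_mem_map (Ici_mem_atTop N), ?_⟩
    rintro _ ⟨i, hi, rfl⟩ _ ⟨j, hj, rfl⟩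
    calc dist (A i x) (A j x) ≤ dist (A i x) (A N x) + dist (A j x) (A N x) :=
          dist_triangle_right _ _ _
      _ < ε := by
          rw [dist_eq_norm, dist_eq_norm]
          linarith [hb i hi, hb j hj]
  choose f hf using key
  let T : H →L[ℂ] H := ContinuousLinearMap.ofTendstoOfBoundedRange f A (tendsto_pi_nhds.2 hf)
    (isBounded_iff_forall_norm_le.2 ⟨C, by rintro _ ⟨i, rfl⟩; exact hC i⟩)
  have hT : ∀ x, Tendsto (fun i => A i x) atTop (𝓝 (T x)) := hf
  have hST : S ≤ T := by
    refine hS.2 T fun i => ?_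
    rw [OpLE, isPos_iff]
    intro x
    have h1 : Tendsto (fun j => ⟪x, (A j - A i) x⟫_ℂ) atTop (𝓝 ⟪x, (T - A i) x⟫_ℂ) :=
      tendsto_const_nhds.inner ((hT x).sub tendsto_const_nhds)
    refine ge_of_tendsto h1 ?_
    filter_upwards [Ici_mem_atTop i] with j hj
    exact (isPos_iff _).1 (hmono i j hj) x
  have hTS : T ≤ S := by
    change (S - T).IsPositive
    rw [isPos_iff]
    intro x
    have h1 : Tendsto (fun j => ⟪x, (S - A j) x⟫_ℂ) atTop (𝓝 ⟪x, (S - T) x⟫_ℂ) :=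
      tendsto_const_nhds.inner (tendsto_const_nhds.sub (hT x))
    exact ge_of_tendsto' h1 fun j => (isPos_iff _).1 (hS.1 j) x
  rw [le_antisymm hST hTS]
  exact hT x

theorem hasSum_of_normal (φ : (H →L[ℂ] H) →L[ℂ] ℂ)
    (hpos : ∀ A : H →L[ℂ] H, A.IsPositive → 0 ≤ φ A) (hnorm : ‖φ‖ = 1) (hone : φ 1 = 1)
    (hn : IsNormalState φ) (ρ : H →L[ℂ] H) (hρ : ∀ x y, ⟪x, ρ y⟫_ℂ = φ (rankOne ℂ y x))
    {ι : Type} (e : HilbertBasis ι ℂ H) (A : H →L[ℂ] H) :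
    HasSum (fun j => ⟪e j, ρ (A (e j))⟫_ℂ) (φ A) := by
  have h1 : ∀ F : Finset ι, ∑ j ∈ F, ⟪e j, ρ (A (e j))⟫_ℂ = φ (A * finProj e F) := by
    intro F
    rw [mul_finProj, map_sum]
    exact Finset.sum_congr rfl fun j _ => hρ _ _
  rw [HasSum]
  simp only [SummationFilter.unconditional_filter]
  simp_rw [h1]
  rw [tendsto_iff_norm_sub_tendsto_zero]
  have h2 := (tendsto_of_normal φ hpos hone hn e).const_mul (‖A‖ ^ 2)
  rw [mul_zero] at h2
  have h3 : Tendsto (fun F => ‖φ (A * finProj e F) - φ A‖ ^ 2) atTop (𝓝 0) := by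
    refine squeeze_zero (fun _ => by positivity) (fun F => ?_) h2
    rw [norm_sub_rev]
    exact approx_state φ hpos hnorm A _ (finProj_star e F) (finProj_sq e F)
  have h4 := h3.sqrt
  simpa using h4

theorem normal_of_density (φ : (H →L[ℂ] H) →L[ℂ] ℂ)
    (hpos : ∀ A : H →L[ℂ] H, A.IsPositive → 0 ≤ φ A) (hnorm : ‖φ‖ = 1) (hone : φ 1 = 1)
    (ρ : H →L[ℂ] H) {κ : Type} (e : HilbertBasis κ ℂ H)
    (h : ∀ A : H →L[ℂ] H, HasSum (fun j => ⟪e j, ρ (A (e j))⟫_ℂ) (φ A)) :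
    IsNormalState φ := by
  have : OrderClosedTopology ℂ := Complex.orderClosedTopology
  have hfin : ∀ (A : H →L[ℂ] H) (F : Finset κ),
      φ (A * finProj e F) = ∑ j ∈ F, ⟪e j, ρ (A (e j))⟫_ℂ := by
    intro A F
    have h1 := h (A * finProj e F)
    have h2 : HasSum (fun j => ⟪e j, ρ ((A * finProj e F) (e j))⟫_ℂ)
        (∑ j ∈ F, ⟪e j, ρ ((A * finProj e F) (e j))⟫_ℂ) := by
      refine hasSum_sum_of_ne_finset_zero fun j hj => ?_
      change ⟪e j, ρ (A (finProj e F (e j)))⟫_ℂ = 0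
      rw [finProj_not_mem e hj]
      simp
    rw [h1.unique h2]
    refine Finset.sum_congr rfl fun j hj => ?_
    change ⟪e j, ρ (A (finProj e F (e j)))⟫_ℂ = _
    rw [finProj_mem e hj]
  intro ι _ _ A hmono hApos hbd S hS
  have hne : Nonempty ι := by
    by_contra hemp
    rw [not_nonempty_iff] at hemp
    have h1 := hpos _ (hS.2 (S - 1) fun i => hemp.elim i)
    have h2 := (Complex.nonneg_iff.1 h1).1
    simp [hone] at h2
    linarith
  have hst := strong_tendsto A hmono hbd S hS
  obtain ⟨C, hC⟩ := hbd
  have hC0 : 0 ≤ C := (norm_nonneg _).trans (hC (Classical.arbitrary ι))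
  have hlim : Tendsto (fun i => φ (A i)) atTop (𝓝 (φ S)) := by
    rw [Metric.tendsto_nhds]
    intro ε hε
    let D := ‖S‖ + C + 1
    have hD : 0 < D := by positivity
    have hBD : ∀ i, ‖A i - S‖ ≤ D := fun i => (norm_sub_le _ _).trans (by
      simp only [D]; linarith [hC i])
    -- choose a finite set
    have h1 : Tendsto (fun F => (φ (finProj e F)).re) atTop (𝓝 (φ 1).re) := by
      have := h 1
      rw [HasSum] at this
      simp only [SummationFilter.unconditional_filter] at this
      have h' := (Complex.continuous_re.tendsto _).comp this
      refine h'.congr fun F => ?_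
      have := hfin 1 F
      rw [one_mul] at this
      simp only [Function.comp, this]
    let δ := (ε / (2 * D)) ^ 2
    have hδ : 0 < δ := by positivity
    obtain ⟨F, hF⟩ := (h1.eventually (lt_mem_nhds (show (φ 1).re - δ < (φ 1).re by linarith))).exists
    have hF' : (φ (1 - finProj e F)).re ≤ δ := by
      rw [map_sub, Complex.sub_re]; linarith
    have h2 : ∀ i, ‖φ (A i - S) - φ ((A i - S) * finProj e F)‖ ≤ ε / 2 := by
      intro i
      have := approx_state φ hpos hnorm (A i - S) _ (finProj_star e F) (finProj_sq e F)
      refine le_of_sq_le_sq ?_ (by positivity)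
      calc _ ≤ _ := this
        _ ≤ ‖A i - S‖ ^ 2 * δ := by gcongr
        _ ≤ D ^ 2 * δ := by gcongr; exact hBD i
        _ = (ε / 2) ^ 2 := by simp only [δ]; field_simp
    have h3 : Tendsto (fun i => φ ((A i - S) * finProj e F)) atTop (𝓝 0) := by
      simp_rw [hfin]
      have : (0 : ℂ) = ∑ j ∈ F, ⟪e j, ρ (S (e j) - S (e j))⟫_ℂ := by simp
      rw [this]
      refine tendsto_finsetSum _ fun j _ => ?_
      exact tendsto_const_nhds.inner ((ρ.continuous.tendsto _).comp
        ((hst (e j)).sub tendsto_const_nhds))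
    rw [Metric.tendsto_nhds] at h3
    filter_upwards [h3 (ε / 2) (by positivity)] with i hi
    rw [dist_zero_right] at hi
    rw [dist_eq_norm, ← map_sub]
    calc ‖φ (A i - S)‖ = ‖(φ (A i - S) - φ ((A i - S) * finProj e F))
          + φ ((A i - S) * finProj e F)‖ := by rw [sub_add_cancel]
      _ ≤ _ := norm_add_le _ _
      _ < ε := by linarith [h2 i]
  constructor
  · rintro _ ⟨i, rfl⟩
    have := hpos _ (hS.1 i)
    rw [map_sub, sub_nonneg] at this
    exact this
  · intro b hb
    exact le_of_tendsto' hlim fun i => hb ⟨i, rfl⟩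

end

/-- A state on `B(H)` is normal iff it is given by a density matrix: a positive trace-class
operator `ρ` with `tr ρ = 1`, via `φ(A) = tr(ρ A)`. -/
theorem normal_state_iff_density_matrix {H : Type} [NormedAddCommGroup H]
    [InnerProductSpace ℂ H] [CompleteSpace H]
    (φ : (H →L[ℂ] H) →L[ℂ] ℂ)
    (hpos : ∀ A : H →L[ℂ] H, A.IsPositive → 0 ≤ φ A)
    (hnorm : ‖φ‖ = 1) (hone : φ 1 = 1) :
    IsNormalState φ ↔
      ∃ ρ : H →L[ℂ] H, ρ.IsPositive ∧
        (∀ (ι : Type) (e : HilbertBasis ι ℂ H),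
          Summable (fun j => ⟪e j, ρ (e j)⟫_ℂ) ∧ ∑' j, ⟪e j, ρ (e j)⟫_ℂ = 1) ∧
        (∀ (ι : Type) (e : HilbertBasis ι ℂ H) (A : H →L[ℂ] H),
          Summable (fun j => ⟪e j, ρ (A (e j))⟫_ℂ) ∧
            φ A = ∑' j, ⟪e j, ρ (A (e j))⟫_ℂ) := by
  constructor
  · intro hn
    obtain ⟨ρ, hρ⟩ := exists_density φ
    refine ⟨ρ, ?_, ?_, ?_⟩
    · rw [isPos_iff]
      intro x
      rw [hρ]
      exact hpos _ (isPositive_rankOne_self x)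
    · intro ι e
      have := hasSum_of_normal φ hpos hnorm hone hn ρ hρ e 1
      rw [hone] at this
      exact ⟨this.summable, this.tsum_eq⟩
    · intro ι e A
      have := hasSum_of_normal φ hpos hnorm hone hn ρ hρ e A
      exact ⟨this.summable, this.tsum_eq.symm⟩
  · rintro ⟨ρ, -, -, h⟩
    obtain ⟨w, e, -⟩ := exists_hilbertBasis ℂ H
    refine normal_of_density φ hpos hnorm hone ρ e fun A => ?_
    obtain ⟨h1, h2⟩ := h w e A
    rw [h2]
    exact h1.hasSum
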